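/- arXiv:1103.0415 — 2 statements merged into one kernel-verified Lean document; each statement's English description precedes it below -/
import Mathlib

section
/- Let A and E be normal n×n complex matrices. Then A + E is normal if and only if for all γ, μ, α ∈ ℂ with γ·conj(μ) ∈ ℝ, the matrix γA + μE + αI is normal. -/
open Matrix

/-- Let `A` and `E` be normal `n × n` complex matrices.  Then `A + E` is
normal iff for all `γ, μ, α ∈ ℂ` with `γ · conj μ ∈ ℝ`, the matrix `γA + μE + αI` is normal. -/
theorem stmt7 (n : ℕ) (A E : Matrix (Fin n) (Fin n) ℂ)
    (hA : A * Aᴴ = Aᴴ * A) (hE : E * Eᴴ = Eᴴ * E) :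
    (A + E) * (A + E)ᴴ = (A + E)ᴴ * (A + E) ↔
      ∀ γ μ α : ℂ, (γ * star μ).im = 0 →
        (γ • A + μ • E + α • (1 : Matrix (Fin n) (Fin n) ℂ))
            * (γ • A + μ • E + α • (1 : Matrix (Fin n) (Fin n) ℂ))ᴴ
          = (γ • A + μ • E + α • (1 : Matrix (Fin n) (Fin n) ℂ))ᴴ
            * (γ • A + μ • E + α • (1 : Matrix (Fin n) (Fin n) ℂ)) := by
  constructor
  · intro h γ μ α hr
    have hX : A * Eᴴ + E * Aᴴ = Aᴴ * E + Eᴴ * A := by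
      simp only [conjTranspose_add, add_mul, mul_add] at h
      linear_combination (norm := module) h - hA - hE
    have hs : μ * star γ = γ * star μ := by
      have h1 := Complex.conj_eq_iff_im.mpr hr
      simp only [map_mul, Complex.star_def, Complex.conj_conj] at h1 ⊢
      rw [← h1]; ring
    simp only [conjTranspose_add, conjTranspose_smul, conjTranspose_one, add_mul, mul_add,
      smul_mul_assoc, mul_smul_comm, mul_one, one_mul, smul_add, smul_smul]
    linear_combination (norm := module) (γ * star γ) • hA + (μ * star μ) • hE + (γ * star μ) • hX + hs • (E * Aᴴ - Aᴴ * E)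
  · intro h
    simpa using h 1 1 0 (by simp)
end

section
/- Let A and B be normal n×n complex matrices and set E = B − A. If E is normal, then tA + (1−t)B is normal for every t ∈ ℝ. If E is not normal, then for t ∈ ℝ the matrix tA + (1−t)B is normal only for t = 0 and t = 1. -/
open Matrix

theorem key_identity (n : ℕ) (A B : Matrix (Fin n) (Fin n) ℂ) (t : ℝ) :
    ((t : ℂ) • A + ((1 : ℂ) - (t : ℂ)) • B) * ((t : ℂ) • A + ((1 : ℂ) - (t : ℂ)) • B)ᴴ
      - ((t : ℂ) • A + ((1 : ℂ) - (t : ℂ)) • B)ᴴ * ((t : ℂ) • A + ((1 : ℂ) - (t : ℂ)) • B)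
    = (t : ℂ) • (A * Aᴴ - Aᴴ * A) + ((1 : ℂ) - (t : ℂ)) • (B * Bᴴ - Bᴴ * B)
      - ((t : ℂ) * (1 - (t : ℂ))) • ((B - A) * (B - A)ᴴ - (B - A)ᴴ * (B - A)) := by
  have h : ((t : ℂ) • A + ((1 : ℂ) - (t : ℂ)) • B)ᴴ
      = (t : ℂ) • Aᴴ + ((1 : ℂ) - (t : ℂ)) • Bᴴ := by
    simp [conjTranspose_add, conjTranspose_smul]
  rw [h, conjTranspose_sub]
  simp only [add_mul, mul_add, sub_mul, mul_sub, smul_mul_assoc, mul_smul_comm]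
  module

/-- Let `A` and `B` be normal `n × n` complex matrices and `E = B − A`.
If `E` is normal, then `tA + (1−t)B` is normal for every `t ∈ ℝ`; if `E` is not normal, then
`tA + (1−t)B` (for `t ∈ ℝ`) is normal only for `t = 0` and `t = 1`. -/
theorem stmt12 (n : ℕ) (A B : Matrix (Fin n) (Fin n) ℂ)
    (hA : A * Aᴴ = Aᴴ * A) (hB : B * Bᴴ = Bᴴ * B) :
    ((B - A) * (B - A)ᴴ = (B - A)ᴴ * (B - A) →
      ∀ t : ℝ, ((t : ℂ) • A + ((1 : ℂ) - (t : ℂ)) • B) * ((t : ℂ) • A + ((1 : ℂ) - (t : ℂ)) • B)ᴴ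
        = ((t : ℂ) • A + ((1 : ℂ) - (t : ℂ)) • B)ᴴ * ((t : ℂ) • A + ((1 : ℂ) - (t : ℂ)) • B)) ∧
    (¬ ((B - A) * (B - A)ᴴ = (B - A)ᴴ * (B - A)) →
      ∀ t : ℝ, ((t : ℂ) • A + ((1 : ℂ) - (t : ℂ)) • B) * ((t : ℂ) • A + ((1 : ℂ) - (t : ℂ)) • B)ᴴ
          = ((t : ℂ) • A + ((1 : ℂ) - (t : ℂ)) • B)ᴴ * ((t : ℂ) • A + ((1 : ℂ) - (t : ℂ)) • B) →
        t = 0 ∨ t = 1) := by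
  have key := key_identity n A B
  rw [hA, hB] at key
  simp only [sub_self, smul_zero, add_zero, zero_sub] at key
  refine ⟨fun hE t => ?_, fun hE t ht => ?_⟩
  · have k := key t
    rw [hE, sub_self, smul_zero, neg_zero] at k
    exact sub_eq_zero.mp k
  · have k := key t
    rw [ht, sub_self] at k
    have k2 := neg_eq_zero.mp k.symm
    rcases smul_eq_zero.mp k2 with h | h
    · rcases mul_eq_zero.mp h with h | h
      · left
        exact_mod_cast h
      · right
        have h3 : (1 : ℂ) = (t : ℂ) := sub_eq_zero.mp h
        exact_mod_cast h3.symm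
    · exact absurd (sub_eq_zero.mp h) hE
end
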